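/- arXiv:1805.09118 — 2 statements merged into one kernel-verified Lean document; each statement's English description precedes it below -/
import Mathlib

section
/- Let m ≥ 3 be odd and let G ≤ M be a subgroup such that π(G) has order 2, generated by a transposition fixing the index k and swapping the indices i and j. Put e = |N(G)|, a = |N(G) ∩ H_i| and c = |N(G) ∩ H_k|. Then |N(G) ∩ H_j| = a, c | m, a | c, a*c | e, (e/a) | m, gcd(e/(a*c), c/a) = 1, and the number of elements of order 2 in G ∖ N(G) equals e/c. -/
/-- `V = (ZMod m)³`, written multiplicatively. -/
abbrev Vgrp (m : ℕ) : Type := Fin 3 → Multiplicative (ZMod m)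

/-- The diagonal embedding `ZMod m → (ZMod m)³`. -/
def diagHom (m : ℕ) : Multiplicative (ZMod m) →* Vgrp m :=
  MonoidHom.mk' (fun t _ => t) (fun _ _ => rfl)

/-- The diagonal subgroup `Δ = {(t,t,t)}` of `(ZMod m)³`. -/
def Δgrp (m : ℕ) : Subgroup (Vgrp m) := (diagHom m).range

/-- `W = (ZMod m)³ ⧸ Δ`. -/
abbrev Wgrp (m : ℕ) : Type := Vgrp m ⧸ Δgrp m

/-- The action of `S₃ = Equiv.Perm (Fin 3)` on `(ZMod m)³` permuting the coordinates. -/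
def permV (m : ℕ) : Equiv.Perm (Fin 3) →* MulAut (Vgrp m) :=
  MonoidHom.mk'
    (fun σ => MulEquiv.arrowCongr σ (MulEquiv.refl (Multiplicative (ZMod m))))
    (fun σ τ => by ext v i; rfl)

lemma permV_map_diag (m : ℕ) (σ : Equiv.Perm (Fin 3)) :
    (Δgrp m).map (permV m σ) = Δgrp m := by
  ext v
  constructor
  · rintro ⟨_, ⟨t, rfl⟩, rfl⟩
    exact ⟨t, rfl⟩
  · rintro ⟨t, rfl⟩
    exact ⟨diagHom m t, ⟨t, rfl⟩, rfl⟩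

/-- The action of `S₃` on `W`, permuting the three coordinates (well defined since
`Δ` is invariant). -/
def permW (m : ℕ) : Equiv.Perm (Fin 3) →* MulAut (Wgrp m) :=
  MonoidHom.mk'
    (fun σ => QuotientGroup.congr (Δgrp m) (Δgrp m) (permV m σ) (permV_map_diag m σ))
    (fun σ τ => by
      ext x
      refine QuotientGroup.induction_on x (fun v => ?_)
      rfl)

/-- `M = W ⋊ S₃`. -/
abbrev Mgrp (m : ℕ) : Type := Wgrp m ⋊[permW m] Equiv.Perm (Fin 3)

/-- `N(G) = G ∩ W`, where `W` is identified with the kernel of the projection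
`π = rightHom : M → S₃` (i.e. with `W × {1} ≤ M`). -/
def NG {m : ℕ} (G : Subgroup (Mgrp m)) : Subgroup (Mgrp m) :=
  G ⊓ (SemidirectProduct.rightHom : Mgrp m →* Equiv.Perm (Fin 3)).ker

/-- The subgroup of `V = (ZMod m)³` of triples whose two coordinates with index
different from `i` are equal. -/
def HV (m : ℕ) (i : Fin 3) : Subgroup (Vgrp m) :=
  MonoidHom.ker (MonoidHom.mk' (fun v : Vgrp m => v (i + 1) / v (i + 2))
    (fun _ _ => mul_div_mul_comm _ _ _ _))

/-- `H_i ≤ W`: classes of triples whose two coordinates with index different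
from `i` are equal. -/
def Hsub (m : ℕ) (i : Fin 3) : Subgroup (Wgrp m) :=
  (HV m i).map (QuotientGroup.mk' (Δgrp m))

/-- `H_i`, identified with the subgroup `H_i × {1}` of `M`. -/
def HsubM (m : ℕ) (i : Fin 3) : Subgroup (Mgrp m) :=
  (Hsub m i).map (SemidirectProduct.inl : Wgrp m →* Mgrp m)

/-!
Choosing coordinates at `i` and `j` identifies `W` with `Z × Z`, where `Z` is cyclic of order `m`.
The swap of `i` and `j` becomes the swap of the factors, `H_i` and `H_j` become the two factors, and
`H_k` becomes the diagonal. Since `m` is odd, a swap-invariant subgroup `S` of `Z × Z` is the direct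
product of its diagonal part `C` and its antidiagonal part `D`, and `(x, 1) ∈ S` iff
`x ∈ C ∩ D` as subgroups of `Z`. As `Z` is cyclic, `e = c d`, `a = gcd(c, d)` and
`e / a = lcm(c, d)` with `c` and `d = |D|` dividing `m`, whence all the divisibility relations.
Finally `N(G)` has index `2` in `G` and odd order, so `G ∖ N(G)` contains an involution `u`, and
`n u`, for `n ∈ N(G)`, is an involution iff `n` is inverted by the swap; this gives `d = e / c`
involutions.
-/

lemma gcd_mul_dvd_mul (c d : ℕ) : c.gcd d * c ∣ c * d := by
  rw [mul_comm]
  exact Nat.mul_dvd_mul_left c (Nat.gcd_dvd_right c d)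

lemma gcd_mul_div_gcd_mul_div_gcd {c : ℕ} (hc : 0 < c) (d : ℕ) :
    Nat.gcd (c * d / (c.gcd d * c)) (c / c.gcd d) = 1 := by
  rw [mul_comm _ c, Nat.mul_div_mul_left _ _ hc, Nat.gcd_comm]
  exact Nat.coprime_div_gcd_div_gcd (Nat.gcd_pos_of_pos_left d hc)

lemma odd_card_multiplicative_zmod {m : ℕ} (hm : Odd m) :
    Odd (Nat.card (Multiplicative (ZMod m))) := by
  rwa [Nat.card_congr Multiplicative.toAdd, Nat.card_zmod]

lemma card_subgroup_multiplicative_zmod_dvd {m : ℕ} (C : Subgroup (Multiplicative (ZMod m))) :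
    Nat.card C ∣ m := by
  simpa only [Nat.card_congr Multiplicative.toAdd, Nat.card_zmod] using C.card_subgroup_dvd_card

lemma mem_of_sq_mem_of_odd_card {A : Type*} [Group A] (hA : Odd (Nat.card A)) {K : Subgroup A}
    {x : A} (hx : x ^ 2 ∈ K) : x ∈ K := by
  have hcop : Nat.Coprime 2 (orderOf x) :=
    Nat.coprime_two_left.mpr (hA.of_dvd_nat (orderOf_dvd_natCard x))
  obtain ⟨n, hn⟩ := exists_pow_eq_self_of_coprime hcop
  exact hn ▸ K.pow_mem hx n

lemma odd_card_prod_self {Z : Type*} (hZ : Odd (Nat.card Z)) : Odd (Nat.card (Z × Z)) := by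
  rw [Nat.card_prod]
  exact hZ.mul hZ

lemma card_inf_range_of_injective {K M : Type*} [Group K] [Group M] {f : K →* M}
    (hf : Function.Injective f) (G : Subgroup M) :
    Nat.card ↥(G ⊓ f.range) = Nat.card (G.comap f) := by
  rw [inf_comm, ← Subgroup.map_comap_eq, Subgroup.card_map_of_injective hf]

lemma semidirectProduct_conj_inl {A Q : Type*} [CommGroup A] [Group Q] {φ : Q →* MulAut A}
    (x : A ⋊[φ] Q) (w : A) :
    x * SemidirectProduct.inl w * x⁻¹ = SemidirectProduct.inl (φ x.right w) := by
  ext <;> simp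

lemma orderOf_swap_of_ne {α : Type*} [DecidableEq α] {i j : α} (hij : i ≠ j) :
    orderOf (Equiv.swap i j) = 2 := by
  refine orderOf_eq_prime (by rw [pow_two, Equiv.swap_mul_self]) ?_
  rwa [Ne, Equiv.swap_eq_one_iff]

section CyclicGroup

variable {Z : Type*} [CommGroup Z] [IsCyclic Z] [Finite Z]

lemma mem_iff_pow_card_eq_one_of_isCyclic (C : Subgroup Z) (x : Z) :
    x ∈ C ↔ x ^ Nat.card C = 1 := by
  have hle : C ≤ (powMonoidHom (Nat.card C) : Z →* Z).ker := fun y hy =>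
    orderOf_dvd_iff_pow_eq_one.mp (C.orderOf_dvd_natCard hy)
  have hcard : Nat.card (powMonoidHom (Nat.card C) : Z →* Z).ker = Nat.card C := by
    rw [IsCyclic.card_powMonoidHom_ker, Nat.gcd_eq_right C.card_subgroup_dvd_card]
  exact SetLike.ext_iff.mp (Subgroup.eq_of_le_of_card_ge hle hcard.le) x

lemma card_inf_eq_gcd_of_isCyclic (C D : Subgroup Z) :
    Nat.card ↥(C ⊓ D) = (Nat.card C).gcd (Nat.card D) := by
  have hker : C ⊓ D = (powMonoidHom ((Nat.card C).gcd (Nat.card D)) : Z →* Z).ker := by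
    ext x
    rw [Subgroup.mem_inf, mem_iff_pow_card_eq_one_of_isCyclic C,
      mem_iff_pow_card_eq_one_of_isCyclic D, MonoidHom.mem_ker, powMonoidHom_apply,
      ← orderOf_dvd_iff_pow_eq_one, ← orderOf_dvd_iff_pow_eq_one,
      ← orderOf_dvd_iff_pow_eq_one, Nat.dvd_gcd_iff]
  rw [hker, IsCyclic.card_powMonoidHom_ker, Nat.gcd_eq_right]
  exact (Nat.gcd_dvd_left _ _).trans C.card_subgroup_dvd_card

end CyclicGroup

section SwapInvariant

variable {Z : Type*} [CommGroup Z]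

/-- The diagonal embedding `x ↦ (x, x)`, whose image is the set of fixed points of the swap. -/
def diagonalHom (Z : Type*) [CommGroup Z] : Z →* Z × Z :=
  (MonoidHom.id Z).prod (MonoidHom.id Z)

/-- The antidiagonal embedding `x ↦ (x, x⁻¹)`, whose image is the set of elements inverted by the
swap. -/
def antidiagonalHom (Z : Type*) [CommGroup Z] : Z →* Z × Z :=
  (MonoidHom.id Z).prod invMonoidHom

lemma antidiagonalHom_injective : Function.Injective (antidiagonalHom Z) :=
  fun _ _ h => congrArg Prod.fst h

lemma mem_range_antidiagonalHom {p : Z × Z} :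
    p ∈ (antidiagonalHom Z).range ↔ p.swap = p⁻¹ := by
  constructor
  · rintro ⟨x, rfl⟩
    exact Prod.ext rfl (inv_inv x).symm
  · intro h
    exact ⟨p.1, Prod.ext rfl (congrArg Prod.fst h).symm⟩

variable {S : Subgroup (Z × Z)}

lemma comap_inr_eq_comap_inl (hS : ∀ p ∈ S, p.swap ∈ S) :
    S.comap (MonoidHom.inr Z Z) = S.comap (MonoidHom.inl Z Z) :=
  le_antisymm (fun _ hx => hS _ hx) (fun _ hx => hS _ hx)

lemma comap_inl_eq_inf (hZ : Odd (Nat.card Z)) (hS : ∀ p ∈ S, p.swap ∈ S) :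
    S.comap (MonoidHom.inl Z Z) =
      S.comap (diagonalHom Z) ⊓ S.comap (antidiagonalHom Z) := by
  ext x
  change (x, 1) ∈ S ↔ (x, x) ∈ S ∧ (x, x⁻¹) ∈ S
  constructor
  · intro h
    have h' : (1, x) ∈ S := hS _ h
    exact ⟨by simpa using S.mul_mem h h', by simpa using S.div_mem h h'⟩
  · rintro ⟨h, h'⟩
    refine mem_of_sq_mem_of_odd_card (odd_card_prod_self hZ) ?_
    simpa [pow_two] using S.mul_mem h h'

lemma diagonalHom_coprod_antidiagonalHom_injective (hZ : Odd (Nat.card Z)) :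
    Function.Injective ((diagonalHom Z).coprod (antidiagonalHom Z)) := by
  refine (injective_iff_map_eq_one _).mpr fun ⟨x, y⟩ h => ?_
  have hmul : x * y = 1 := congrArg Prod.fst h
  have hdiv : x * y⁻¹ = 1 := congrArg Prod.snd h
  have hxy : x = y := mul_inv_eq_one.mp hdiv
  have hy : y ∈ (⊥ : Subgroup Z) :=
    mem_of_sq_mem_of_odd_card hZ (by rw [Subgroup.mem_bot, pow_two, ← hmul, hxy])
  rw [Subgroup.mem_bot] at hy
  exact Prod.ext (hxy.trans hy) hy

lemma comap_diagonalHom_coprod_antidiagonalHom (hZ : Odd (Nat.card Z))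
    (hS : ∀ p ∈ S, p.swap ∈ S) :
    S.comap ((diagonalHom Z).coprod (antidiagonalHom Z)) =
      (S.comap (diagonalHom Z)).prod (S.comap (antidiagonalHom Z)) := by
  ext ⟨x, y⟩
  rw [Subgroup.mem_prod]
  change (x * y, x * y⁻¹) ∈ S ↔ (x, x) ∈ S ∧ (y, y⁻¹) ∈ S
  constructor
  · intro h
    have h' : (x * y⁻¹, x * y) ∈ S := hS _ h
    have hsq : (x, x) ^ 2 = (x * y, x * y⁻¹) * (x * y⁻¹, x * y) := by
      ext <;> simp [pow_two, mul_mul_mul_comm]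
    have hsq' : (y, y⁻¹) ^ 2 = (x * y, x * y⁻¹) / (x * y⁻¹, x * y) :=
      Prod.ext (by simp [pow_two]) (by simp [pow_two, div_eq_mul_inv y⁻¹])
    exact ⟨mem_of_sq_mem_of_odd_card (odd_card_prod_self hZ) (hsq ▸ S.mul_mem h h'),
      mem_of_sq_mem_of_odd_card (odd_card_prod_self hZ) (hsq' ▸ S.div_mem h h')⟩
  · rintro ⟨h, h'⟩
    exact S.mul_mem h h'

lemma card_eq_card_comap_diagonalHom_mul (hZ : Odd (Nat.card Z)) (hS : ∀ p ∈ S, p.swap ∈ S) :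
    Nat.card S = Nat.card (S.comap (diagonalHom Z)) * Nat.card (S.comap (antidiagonalHom Z)) := by
  have : Finite Z := Nat.finite_of_card_ne_zero hZ.pos.ne'
  set f := (diagonalHom Z).coprod (antidiagonalHom Z)
  have hinj : Function.Injective f := diagonalHom_coprod_antidiagonalHom_injective hZ
  have hsurj : Function.Surjective f := Finite.surjective_of_injective hinj
  calc Nat.card S = Nat.card ((S.comap f).map f) := by
        rw [Subgroup.map_comap_eq_self_of_surjective hsurj]
    _ = Nat.card (S.comap f) := Subgroup.card_map_of_injective hinj
    _ = Nat.card ((S.comap (diagonalHom Z)).prod (S.comap (antidiagonalHom Z))) := by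
        rw [comap_diagonalHom_coprod_antidiagonalHom hZ hS]
    _ = _ := by rw [Nat.card_congr (Subgroup.prodEquiv _ _).toEquiv, Nat.card_prod]

lemma card_comap_inl_eq_gcd [IsCyclic Z] (hZ : Odd (Nat.card Z)) (hS : ∀ p ∈ S, p.swap ∈ S) :
    Nat.card (S.comap (MonoidHom.inl Z Z)) =
      (Nat.card (S.comap (diagonalHom Z))).gcd (Nat.card (S.comap (antidiagonalHom Z))) := by
  have : Finite Z := Nat.finite_of_card_ne_zero hZ.pos.ne'
  rw [comap_inl_eq_inf hZ hS, card_inf_eq_gcd_of_isCyclic]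

end SwapInvariant

section IndexTwo

variable {M : Type*} [Group M] {N G : Subgroup M}

lemma exists_orderOf_eq_two_notMem (hNG : N ≤ G) (hidx : N.relIndex G = 2)
    (hN : Odd (Nat.card N)) : ∃ u ∈ G, u ∉ N ∧ orderOf u = 2 := by
  have hcard : Nat.card N * 2 = Nat.card G := by
    simpa [hidx] using Subgroup.relIndex_mul_relIndex ⊥ N G bot_le hNG
  have : Finite G := Nat.finite_of_card_ne_zero (by have := hN.pos; omega)
  obtain ⟨u, hu⟩ := exists_prime_orderOf_dvd_card' (G := G) 2 ⟨_, by rw [← hcard, mul_comm]⟩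
  rw [← Subgroup.orderOf_coe] at hu
  refine ⟨u, u.2, fun huN => ?_, hu⟩
  have htwo : 2 ∣ Nat.card N := hu ▸ N.orderOf_dvd_natCard huN
  exact Nat.not_even_iff_odd.mpr hN (even_iff_two_dvd.mpr htwo)

lemma mul_mem_iff_notMem_of_relIndex_eq_two (hidx : N.relIndex G = 2) {x u : M} (hx : x ∈ G)
    (huG : u ∈ G) (huN : u ∉ N) : x * u ∈ N ↔ x ∉ N := by
  have h := Subgroup.mul_mem_iff_of_index_two hidx (a := ⟨x, hx⟩) (b := ⟨u, huG⟩)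
  simp only [Subgroup.mem_subgroupOf, Subgroup.coe_mul] at h
  tauto

lemma card_orderOf_eq_two_notMem (hNG : N ≤ G) (hidx : N.relIndex G = 2) {u : M} (huG : u ∈ G)
    (huN : u ∉ N) (hu : orderOf u = 2) :
    Nat.card {x : M // x ∈ G ∧ x ∉ N ∧ orderOf x = 2} =
      Nat.card {n : M // n ∈ N ∧ u * n * u⁻¹ = n⁻¹} := by
  refine Nat.card_congr ((Equiv.mulRight u).subtypeEquiv fun x => ?_)
  have huu : u * u = 1 := by rw [← pow_two, ← hu, pow_orderOf_eq_one]
  have hinv : u * (x * u) * u⁻¹ = (x * u)⁻¹ ↔ x ^ 2 = 1 := by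
    rw [mul_inv_rev, inv_eq_of_mul_eq_one_right huu, mul_assoc, mul_assoc x, huu, mul_one,
      mul_right_inj, pow_two, eq_inv_iff_mul_eq_one]
  rw [Equiv.coe_mulRight, hinv]
  constructor
  · rintro ⟨hxG, hxN, hx⟩
    exact ⟨(mul_mem_iff_notMem_of_relIndex_eq_two hidx hxG huG huN).mpr hxN,
      hx ▸ pow_orderOf_eq_one x⟩
  · rintro ⟨hxu, hx⟩
    have hxG : x ∈ G := (G.mul_mem_cancel_right huG).mp (hNG hxu)
    have hxN := (mul_mem_iff_notMem_of_relIndex_eq_two hidx hxG huG huN).mp hxu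
    exact ⟨hxG, hxN, orderOf_eq_prime hx (ne_of_mem_of_not_mem N.one_mem hxN).symm⟩

end IndexTwo

section Homologies

/-- The parametrization `z ↦ [(1, …, z, …, 1)]` of `H_i`, with `z` in position `i`. -/
def homologyHom (m : ℕ) (i : Fin 3) : Multiplicative (ZMod m) →* Wgrp m :=
  (QuotientGroup.mk' (Δgrp m)).comp (MonoidHom.mulSingle (fun _ => Multiplicative (ZMod m)) i)

/-- The parametrization `(p, q) ↦ [p at i, q at j, 1 elsewhere]` of `W × {1} ≤ M`, for `i ≠ j`. -/
def homologyPairHom (m : ℕ) (i j : Fin 3) :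
    Multiplicative (ZMod m) × Multiplicative (ZMod m) →* Mgrp m :=
  SemidirectProduct.inl.comp ((homologyHom m i).coprod (homologyHom m j))

variable {m : ℕ} {i j k : Fin 3}

lemma mem_Δgrp {v : Vgrp m} : v ∈ Δgrp m ↔ ∃ t, ∀ l, v l = t :=
  ⟨fun ⟨t, ht⟩ => ⟨t, fun l => (congrFun ht l).symm⟩,
    fun ⟨t, ht⟩ => ⟨t, funext fun l => (ht l).symm⟩⟩

lemma forall_fin_three_iff (hij : i ≠ j) (hik : i ≠ k) (hjk : j ≠ k) {P : Fin 3 → Prop} :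
    (∀ l, P l) ↔ P i ∧ P j ∧ P k := by
  have hcases : ∀ l, l = i ∨ l = j ∨ l = k := by decide +revert
  refine ⟨fun h => ⟨h i, h j, h k⟩, fun ⟨hi, hj, hk⟩ l => ?_⟩
  rcases hcases l with rfl | rfl | rfl <;> assumption

lemma homologyHom_injective (m : ℕ) (i : Fin 3) : Function.Injective (homologyHom m i) := by
  refine (injective_iff_map_eq_one _).mpr fun z hz => ?_
  obtain ⟨t, ht⟩ := mem_Δgrp.mp ((QuotientGroup.eq_one_iff _).mp hz)
  have hi : z = t := by simpa using ht i
  have hi' : 1 = t := by simpa using ht (i + 1)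
  exact hi.trans hi'.symm

lemma range_homologyHom (m : ℕ) (i : Fin 3) : (homologyHom m i).range = Hsub m i := by
  apply le_antisymm
  · rintro _ ⟨z, rfl⟩
    refine ⟨Pi.mulSingle i z, ?_, rfl⟩
    change Pi.mulSingle (M := fun _ => Multiplicative (ZMod m)) i z (i + 1) /
      Pi.mulSingle (M := fun _ => Multiplicative (ZMod m)) i z (i + 2) = 1
    simp
  · rintro _ ⟨v, hv, rfl⟩
    have hv : v (i + 1) = v (i + 2) := div_eq_one.mp hv
    refine ⟨v i / v (i + 1), QuotientGroup.eq.mpr (mem_Δgrp.mpr ⟨v (i + 1), ?_⟩)⟩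
    rw [forall_fin_three_iff (i := i) (j := i + 1) (k := i + 2) (by simp) (by simp) (by simp)]
    simp [hv]

lemma HsubM_eq_range (m : ℕ) (i : Fin 3) :
    HsubM m i = (SemidirectProduct.inl.comp (homologyHom m i) :
      Multiplicative (ZMod m) →* Mgrp m).range := by
  rw [MonoidHom.range_comp, range_homologyHom, HsubM]

lemma homologyHom_mul_mul (hij : i ≠ j) (hik : i ≠ k) (hjk : j ≠ k)
    (z : Multiplicative (ZMod m)) :
    homologyHom m i z * homologyHom m j z * homologyHom m k z = 1 := by
  refine (QuotientGroup.eq_one_iff _).mpr (mem_Δgrp.mpr ⟨z, ?_⟩)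
  rw [forall_fin_three_iff hij hik hjk]
  simp [hij, hik, hjk, hij.symm, hik.symm, hjk.symm]

lemma permW_homologyHom (σ : Equiv.Perm (Fin 3)) (z : Multiplicative (ZMod m)) :
    permW m σ (homologyHom m i z) = homologyHom m (σ i) z := by
  refine congrArg (QuotientGroup.mk (s := Δgrp m)) (funext fun l => ?_)
  change Pi.mulSingle (M := fun _ => Multiplicative (ZMod m)) i z (σ.symm l) =
    Pi.mulSingle (M := fun _ => Multiplicative (ZMod m)) (σ i) z l
  simp only [Pi.mulSingle_apply, Equiv.symm_apply_eq]

lemma homologyPairHom_injective (hij : i ≠ j) (hik : i ≠ k) (hjk : j ≠ k) :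
    Function.Injective (homologyPairHom m i j) := by
  refine SemidirectProduct.inl_injective.comp
    ((injective_iff_map_eq_one _).mpr fun ⟨p, q⟩ h => ?_)
  obtain ⟨t, ht⟩ := mem_Δgrp.mp ((QuotientGroup.eq_one_iff _).mp h)
  obtain ⟨hi, hj, hk⟩ := (forall_fin_three_iff hij hik hjk).mp ht
  have hi : p = t := by simpa [hij] using hi
  have hj : q = t := by simpa [hij.symm] using hj
  have hk : 1 = t := by simpa [hik.symm, hjk.symm] using hk
  exact Prod.ext (hi.trans hk.symm) (hj.trans hk.symm)

lemma range_homologyPairHom (hij : i ≠ j) (hik : i ≠ k) (hjk : j ≠ k) :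
    (homologyPairHom m i j).range = (SemidirectProduct.rightHom : Mgrp m →* _).ker := by
  rw [homologyPairHom, MonoidHom.range_comp, ← SemidirectProduct.range_inl_eq_ker_rightHom,
    MonoidHom.range_eq_top.mpr, MonoidHom.range_eq_map]
  intro w
  induction w using QuotientGroup.induction_on with
  | H v =>
    refine ⟨(v i / v k, v j / v k), QuotientGroup.eq.mpr (mem_Δgrp.mpr ⟨v k, ?_⟩)⟩
    rw [forall_fin_three_iff hij hik hjk]
    simp [hij, hik.symm, hjk.symm, hij.symm]

lemma conj_homologyPairHom {x : Mgrp m} (hx : SemidirectProduct.rightHom x = Equiv.swap i j)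
    (p : Multiplicative (ZMod m) × Multiplicative (ZMod m)) :
    x * homologyPairHom m i j p * x⁻¹ = homologyPairHom m i j p.swap := by
  have hx : x.right = Equiv.swap i j := hx
  change x * SemidirectProduct.inl (homologyHom m i p.1 * homologyHom m j p.2) * x⁻¹ =
    SemidirectProduct.inl (homologyHom m i p.2 * homologyHom m j p.1)
  rw [semidirectProduct_conj_inl, hx, map_mul, permW_homologyHom, permW_homologyHom,
    Equiv.swap_apply_left, Equiv.swap_apply_right, mul_comm]

end Homologies

section Subgroups

variable {m : ℕ} {i j k : Fin 3} (G : Subgroup (Mgrp m))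

lemma NG_le : NG G ≤ G := inf_le_left

lemma card_NG_inf_HsubM (i : Fin 3) :
    Nat.card ↥(NG G ⊓ HsubM m i) =
      Nat.card (G.comap (SemidirectProduct.inl.comp (homologyHom m i))) := by
  have hle : HsubM m i ≤ (SemidirectProduct.rightHom : Mgrp m →* _).ker := by
    rw [← SemidirectProduct.range_inl_eq_ker_rightHom]
    exact Subgroup.map_le_range _ _
  rw [NG, inf_assoc, inf_eq_right.mpr hle, HsubM_eq_range, card_inf_range_of_injective]
  exact SemidirectProduct.inl_injective.comp (homologyHom_injective m i)

lemma card_NG (hij : i ≠ j) (hik : i ≠ k) (hjk : j ≠ k) :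
    Nat.card (NG G) = Nat.card (G.comap (homologyPairHom m i j)) := by
  rw [NG, ← range_homologyPairHom hij hik hjk,
    card_inf_range_of_injective (homologyPairHom_injective hij hik hjk)]

lemma card_NG_inf_HsubM_left (i j : Fin 3) :
    Nat.card ↥(NG G ⊓ HsubM m i) =
      Nat.card ((G.comap (homologyPairHom m i j)).comap (MonoidHom.inl _ _)) := by
  rw [card_NG_inf_HsubM, Subgroup.comap_comap, homologyPairHom, MonoidHom.comp_assoc,
    MonoidHom.coprod_comp_inl]

lemma card_NG_inf_HsubM_right (i j : Fin 3) :
    Nat.card ↥(NG G ⊓ HsubM m j) =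
      Nat.card ((G.comap (homologyPairHom m i j)).comap (MonoidHom.inr _ _)) := by
  rw [card_NG_inf_HsubM, Subgroup.comap_comap, homologyPairHom, MonoidHom.comp_assoc,
    MonoidHom.coprod_comp_inr]

lemma card_NG_inf_HsubM_third (hij : i ≠ j) (hik : i ≠ k) (hjk : j ≠ k) :
    Nat.card ↥(NG G ⊓ HsubM m k) =
      Nat.card ((G.comap (homologyPairHom m i j)).comap (diagonalHom _)) := by
  have hz (z : Multiplicative (ZMod m)) : homologyPairHom m i j (diagonalHom _ z) =
      (SemidirectProduct.inl (homologyHom m k z))⁻¹ := by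
    rw [← map_inv, ← eq_inv_of_mul_eq_one_left (homologyHom_mul_mul hij hik hjk z)]
    rfl
  rw [card_NG_inf_HsubM]
  refine Nat.card_congr (Equiv.subtypeEquivRight fun z => ?_)
  rw [Subgroup.mem_comap, Subgroup.mem_comap, Subgroup.mem_comap, hz, inv_mem_iff,
    MonoidHom.comp_apply]

lemma odd_card_NG (hm : Odd m) (hij : i ≠ j) (hik : i ≠ k) (hjk : j ≠ k) :
    Odd (Nat.card (NG G)) := by
  rw [card_NG G hij hik hjk]
  exact (odd_card_prod_self (odd_card_multiplicative_zmod hm)).of_dvd_nat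
    (Subgroup.card_subgroup_dvd_card _)

variable {G}

lemma swap_mem_comap_homologyPairHom {u : Mgrp m} (huG : u ∈ G)
    (hu : SemidirectProduct.rightHom u = Equiv.swap i j)
    {p : Multiplicative (ZMod m) × Multiplicative (ZMod m)}
    (hp : p ∈ G.comap (homologyPairHom m i j)) : p.swap ∈ G.comap (homologyPairHom m i j) := by
  rw [Subgroup.mem_comap, ← conj_homologyPairHom hu]
  exact G.mul_mem (G.mul_mem huG hp) (G.inv_mem huG)

lemma mem_NG_and_conj_eq_inv_iff (hij : i ≠ j) (hik : i ≠ k) (hjk : j ≠ k) {u : Mgrp m}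
    (hu : SemidirectProduct.rightHom u = Equiv.swap i j) {n : Mgrp m} :
    n ∈ NG G ∧ u * n * u⁻¹ = n⁻¹ ↔
      n ∈ G ⊓ ((homologyPairHom m i j).comp (antidiagonalHom _)).range := by
  have hconj (p) : u * homologyPairHom m i j p * u⁻¹ = (homologyPairHom m i j p)⁻¹ ↔
      p ∈ (antidiagonalHom _).range := by
    rw [conj_homologyPairHom hu, ← map_inv,
      (homologyPairHom_injective hij hik hjk).eq_iff, mem_range_antidiagonalHom]
  rw [NG, ← range_homologyPairHom hij hik hjk, MonoidHom.range_comp, Subgroup.mem_inf,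
    Subgroup.mem_inf, and_assoc]
  refine and_congr_right fun _ => ⟨?_, ?_⟩
  · rintro ⟨⟨p, rfl⟩, hp⟩
    exact Subgroup.mem_map_of_mem _ ((hconj p).mp hp)
  · rintro ⟨p, hp, rfl⟩
    exact ⟨⟨p, rfl⟩, (hconj p).mpr hp⟩

lemma relIndex_NG (hij : i ≠ j)
    (hG : G.map (SemidirectProduct.rightHom : Mgrp m →* _) = Subgroup.zpowers (Equiv.swap i j)) :
    (NG G).relIndex G = 2 := by
  rw [NG, Subgroup.inf_relIndex_left, Subgroup.relIndex_ker, hG, Nat.card_zpowers,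
    orderOf_swap_of_ne hij]

lemma exists_orderOf_eq_two_notMem_NG (hm : Odd m) (hij : i ≠ j) (hik : i ≠ k) (hjk : j ≠ k)
    (hG : G.map (SemidirectProduct.rightHom : Mgrp m →* _) = Subgroup.zpowers (Equiv.swap i j)) :
    ∃ u ∈ G, u ∉ NG G ∧ orderOf u = 2 :=
  exists_orderOf_eq_two_notMem (NG_le G) (relIndex_NG hij hG) (odd_card_NG G hm hij hik hjk)

lemma rightHom_eq_swap_of_notMem_NG (hij : i ≠ j)
    (hG : G.map (SemidirectProduct.rightHom : Mgrp m →* _) = Subgroup.zpowers (Equiv.swap i j))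
    {x : Mgrp m} (hxG : x ∈ G) (hxN : x ∉ NG G) :
    SemidirectProduct.rightHom x = Equiv.swap i j := by
  have hx : SemidirectProduct.rightHom x ∈ Subgroup.zpowers (Equiv.swap i j) :=
    hG ▸ Subgroup.mem_map_of_mem _ hxG
  have hx1 : SemidirectProduct.rightHom x ≠ 1 := fun h => hxN ⟨hxG, h⟩
  rw [mem_zpowers_iff_mem_range_orderOf, orderOf_swap_of_ne hij] at hx
  have hor : SemidirectProduct.rightHom x = Equiv.swap i j ∨ SemidirectProduct.rightHom x = 1 := by
    simpa [Finset.range_add_one] using hx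
  exact hor.resolve_right hx1

lemma card_orderOf_eq_two_notMem_NG (hij : i ≠ j) (hik : i ≠ k) (hjk : j ≠ k)
    (hG : G.map (SemidirectProduct.rightHom : Mgrp m →* _) = Subgroup.zpowers (Equiv.swap i j))
    {u : Mgrp m} (huG : u ∈ G) (huN : u ∉ NG G) (hu : orderOf u = 2) :
    Nat.card {x : Mgrp m // x ∈ G ∧ x ∉ NG G ∧ orderOf x = 2} =
      Nat.card ((G.comap (homologyPairHom m i j)).comap (antidiagonalHom _)) := by
  have hswap := rightHom_eq_swap_of_notMem_NG hij hG huG huN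
  rw [card_orderOf_eq_two_notMem (NG_le G) (relIndex_NG hij hG) huG huN hu,
    Nat.card_congr (Equiv.subtypeEquivRight fun _ =>
      mem_NG_and_conj_eq_inv_iff hij hik hjk hswap), Subgroup.comap_comap,
    ← card_inf_range_of_injective
      ((homologyPairHom_injective hij hik hjk).comp antidiagonalHom_injective)]

end Subgroups

/-- Proposition 3.3(ii) of Dalla Volta–Montanucci–Zini (`q` even, `m = q+1` odd):
necessity part, for a subgroup `G ≤ M` whose image in `S₃` has order `2`,
generated by the transposition swapping the indices `i, j` and fixing `k`. -/
theorem stmt6 (m : ℕ) (hm : 3 ≤ m) (hmodd : Odd m) (i j k : Fin 3)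
    (hij : i ≠ j) (hik : i ≠ k) (hjk : j ≠ k)
    (G : Subgroup (Mgrp m))
    (hpi : G.map (SemidirectProduct.rightHom : Mgrp m →* Equiv.Perm (Fin 3)) =
      Subgroup.zpowers (Equiv.swap i j))
    (e a c : ℕ)
    (hE : e = Nat.card ↥(NG G))
    (hA : a = Nat.card ↥(NG G ⊓ HsubM m i))
    (hC : c = Nat.card ↥(NG G ⊓ HsubM m k)) :
    Nat.card ↥(NG G ⊓ HsubM m j) = a ∧
    c ∣ m ∧ a ∣ c ∧ a * c ∣ e ∧ e / a ∣ m ∧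
    Nat.gcd (e / (a * c)) (c / a) = 1 ∧
    Nat.card {x : Mgrp m // x ∈ G ∧ x ∉ NG G ∧ orderOf x = 2} = e / c := by
  have hZ := odd_card_multiplicative_zmod hmodd
  obtain ⟨u, huG, huN, hu⟩ := exists_orderOf_eq_two_notMem_NG hmodd hij hik hjk hpi
  set S := G.comap (homologyPairHom m i j)
  have hS : ∀ p ∈ S, p.swap ∈ S := fun _ =>
    swap_mem_comap_homologyPairHom huG (rightHom_eq_swap_of_notMem_NG hij hpi huG huN)
  have hcS : c = Nat.card (S.comap (diagonalHom _)) :=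
    hC.trans (card_NG_inf_HsubM_third G hij hik hjk)
  have haS : a = Nat.card (S.comap (MonoidHom.inl _ _)) :=
    hA.trans (card_NG_inf_HsubM_left G i j)
  set d := Nat.card (S.comap (antidiagonalHom _))
  have hecd : e = c * d := by
    rw [hE, card_NG G hij hik hjk, card_eq_card_comap_diagonalHom_mul hZ hS, hcS]
  have hacd : a = c.gcd d := by rw [haS, card_comap_inl_eq_gcd hZ hS, hcS]
  have hcm : c ∣ m := hcS ▸ card_subgroup_multiplicative_zmod_dvd _
  have hdm : d ∣ m := card_subgroup_multiplicative_zmod_dvd _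
  have hc : 0 < c := Nat.pos_of_dvd_of_pos hcm hmodd.pos
  have hb : Nat.card ↥(NG G ⊓ HsubM m j) = a := by
    rw [haS, card_NG_inf_HsubM_right G i j, comap_inr_eq_comap_inl hS]
  have hinv : Nat.card {x : Mgrp m // x ∈ G ∧ x ∉ NG G ∧ orderOf x = 2} = d :=
    card_orderOf_eq_two_notMem_NG hij hik hjk hpi huG huN hu
  refine ⟨hb, hcm, ?_, ?_, ?_, ?_, hinv.trans (Nat.div_eq_of_eq_mul_right hc hecd).symm⟩ <;>
    rw [hacd]
  · exact Nat.gcd_dvd_left c d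
  · exact hecd ▸ gcd_mul_dvd_mul c d
  · exact hecd ▸ Nat.lcm_dvd hcm hdm
  · exact hecd ▸ gcd_mul_div_gcd_mul_div_gcd hc d
end

section
/- Let m ≥ 2 with 3 ∤ m, and let a, e be positive integers with e | m², a² | e, (e/a) | m, e/a² odd, gcd(e/a², a) = 1, and such that there exists a positive integer w with (e/a²) | (w² − w + 1). Then there exists a subgroup G of M with |G| = 3e such that: N(G) has order e; π(G) is the cyclic group of order 3 generated by a 3-cycle; |N(G) ∩ H_i| = a for each i ∈ {1,2,3}; and every element of G ∖ N(G) has order 3. -/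
/-! The coordinates `x = v₁ - v₂`, `y = v₂ - v₀` identify `W` with `(ZMod m)²`. The rotation `ρ` of
the three coordinates becomes `(x, y) ↦ (-x - y, x)`, so `1 + ρ + ρ² = 0` on `W`; this says that the
elements `(u, τ)` of `M` with `τ` a 3-cycle have order 3. With `n = e / a²`, let `N` be the
set of `(x, y)` for which `x` is killed by `n a` and `y + w x` by `a`; it has order `n a · a = e`.
The functional `y + w x` is carried by `ρ` to `-w (y + w x) + (w² - w + 1) x`, and `n ∣ w² - w + 1`,
so `ρ` preserves `N` and `G = N ⋊ ⟨ρ⟩` is a subgroup. Since `H₀` is the line `x = 0`, it meets `N`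
in `a` elements, and `ρ` permutes the three `Hᵢ` cyclically. -/

section SemidirectProduct

open scoped Pointwise

variable {N G : Type*} [Group N] [Group G] {φ : G →* MulAut N}

theorem mem_stabilizer_mulAut_iff {f : MulAut N} {H : Subgroup N} :
    f ∈ MulAction.stabilizer (MulAut N) H ↔ ∀ u, f u ∈ H ↔ u ∈ H := by
  rw [MulAction.mem_stabilizer_iff]
  constructor
  · intro hf u
    nth_rw 1 [← hf]
    exact Subgroup.smul_mem_pointwise_smul_iff
  · intro hf
    ext u
    rw [Subgroup.mem_pointwise_smul_iff_inv_smul_mem, ← hf]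
    exact iff_of_eq (congrArg (· ∈ H) (MulAut.apply_inv_self N f u))

/-- The subgroup `H ⋊ K` of the semidirect product `N ⋊ G`, for a subgroup `H` of `N` stable under
the subgroup `K` of `G`. Stability is phrased with the pointwise action of `MulAut N` on subgroups,
so that it can be checked on generators of `K`. -/
def semidirectSubgroup (φ : G →* MulAut N) (H : Subgroup N) (K : Subgroup G)
    (hK : K ≤ (MulAction.stabilizer (MulAut N) H).comap φ) : Subgroup (N ⋊[φ] G) where
  carrier := {g | g.left ∈ H ∧ g.right ∈ K}
  one_mem' := ⟨one_mem H, one_mem K⟩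
  mul_mem' := by
    rintro g h ⟨hgl, hgr⟩ ⟨hhl, hhr⟩
    refine ⟨mul_mem hgl ?_, mul_mem hgr hhr⟩
    exact hK hgr ▸ Subgroup.smul_mem_pointwise_smul _ (φ g.right) H hhl
  inv_mem' := by
    rintro g ⟨hgl, hgr⟩
    have hgr' := inv_mem hgr
    exact ⟨hK hgr' ▸ Subgroup.smul_mem_pointwise_smul _ (φ g.right⁻¹) H (inv_mem hgl), hgr'⟩

theorem card_semidirectSubgroup {H : Subgroup N} {K : Subgroup G}
    (hK : K ≤ (MulAction.stabilizer (MulAut N) H).comap φ) :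
    Nat.card (semidirectSubgroup φ H K hK) = Nat.card H * Nat.card K := by
  rw [← Nat.card_prod]
  exact Nat.card_congr ((SemidirectProduct.equivProd.subtypeEquiv fun _ => Iff.rfl).trans
    (Equiv.subtypeProdEquivProd (p := (· ∈ H)) (q := (· ∈ K))))

theorem semidirectSubgroup_inf_ker_rightHom {H : Subgroup N} {K : Subgroup G}
    (hK : K ≤ (MulAction.stabilizer (MulAut N) H).comap φ) :
    semidirectSubgroup φ H K hK ⊓ SemidirectProduct.rightHom.ker =
      H.map SemidirectProduct.inl := by
  ext g
  constructor
  · rintro ⟨⟨hgl, -⟩, hgr⟩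
    exact ⟨g.left, hgl, SemidirectProduct.ext rfl (Eq.symm hgr)⟩
  · rintro ⟨u, hu, rfl⟩
    exact ⟨⟨hu, one_mem K⟩, rfl⟩

theorem map_rightHom_semidirectSubgroup {H : Subgroup N} {K : Subgroup G}
    (hK : K ≤ (MulAction.stabilizer (MulAut N) H).comap φ) :
    (semidirectSubgroup φ H K hK).map SemidirectProduct.rightHom = K := by
  ext τ
  constructor
  · rintro ⟨g, hg, rfl⟩
    exact hg.2
  · intro hτ
    exact ⟨SemidirectProduct.inr τ, ⟨one_mem H, hτ⟩, rfl⟩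

end SemidirectProduct

section Torsion

open Submodule

theorem card_torsionBy_zmod (m : ℕ) [NeZero m] (d : ℕ) :
    Nat.card (torsionBy (ZMod m) (ZMod m) d) = m.gcd d := by
  have hker := IsCyclic.card_powMonoidHom_ker (G := Multiplicative (ZMod m)) d
  rw [Nat.card_congr Multiplicative.toAdd, Nat.card_zmod] at hker
  refine Eq.trans (Nat.card_congr (Multiplicative.ofAdd.subtypeEquiv fun x => ?_)) hker
  rw [mem_torsionBy_iff, MonoidHom.mem_ker, powMonoidHom_apply, ← ofAdd_nsmul, ofAdd_eq_one,
    nsmul_eq_mul, smul_eq_mul]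

theorem card_comap_prod {R M M₁ M₂ : Type*} [Semiring R] [AddCommMonoid M] [AddCommMonoid M₁]
    [AddCommMonoid M₂] [Module R M] [Module R M₁] [Module R M₂] (f : M ≃ₗ[R] M₁ × M₂)
    (P : Submodule R M₁) (Q : Submodule R M₂) :
    Nat.card ((P.prod Q).comap (f : M →ₗ[R] M₁ × M₂)) = Nat.card P * Nat.card Q := by
  rw [← Nat.card_prod]
  exact Nat.card_congr ((f.toEquiv.subtypeEquiv fun _ => Iff.rfl).trans
    (Equiv.subtypeProdEquivProd (p := (· ∈ P)) (q := (· ∈ Q))))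

variable {R : Type*} [CommRing R]

/-- The shear `(x, y) ↦ (x, y + w x)` of `R²`. -/
def shear (w : R) : (R × R) ≃ₗ[R] R × R :=
  (LinearEquiv.refl R R).skewProd (LinearEquiv.refl R R) (LinearMap.lsmul R R w)

/-- The pairs `(x, y)` for which `x` is `n a`-torsion and `y + w x` is `a`-torsion: the subgroup
`N(G)` in coordinates. -/
def shearTorsion (n a w : R) : Submodule R (R × R) :=
  ((torsionBy R R (n * a)).prod (torsionBy R R a)).comap (shear w : R × R →ₗ[R] R × R)

theorem mem_shearTorsion {n a w : R} {p : R × R} :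
    p ∈ shearTorsion n a w ↔ n * a * p.1 = 0 ∧ a * (p.2 + w * p.1) = 0 :=
  Iff.rfl

theorem card_shearTorsion (n a w : R) :
    Nat.card (shearTorsion n a w) = Nat.card (torsionBy R R (n * a)) * Nat.card (torsionBy R R a) :=
  card_comap_prod _ _ _

theorem card_shearTorsion_inf_ker_fst (n a w : R) :
    Nat.card ↥(shearTorsion n a w ⊓ LinearMap.ker (LinearMap.fst R R R)) =
      Nat.card (torsionBy R R a) := by
  have hcomap : shearTorsion n a w ⊓ LinearMap.ker (LinearMap.fst R R R) =
      ((⊥ : Submodule R R).prod (torsionBy R R a)).comap (shear w : R × R →ₗ[R] R × R) := by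
    ext ⟨x, y⟩
    constructor
    · rintro ⟨⟨-, hy⟩, hx⟩
      exact ⟨hx, hy⟩
    · rintro ⟨hx, hy⟩
      have hx' : x = 0 := hx
      exact ⟨⟨by simp [shear, hx'], hy⟩, hx⟩
  rw [hcomap, card_comap_prod, Nat.card_unique, one_mul]

/-- The order 3 map of `R²` that the cyclic rotation of `v₀, v₁, v₂` induces on the differences
`(v₁ - v₂, v₂ - v₀)`. -/
def rotateDiff (p : R × R) : R × R :=
  (-p.1 - p.2, p.1)

theorem rotateDiff_rotateDiff_rotateDiff (p : R × R) :
    rotateDiff (rotateDiff (rotateDiff p)) = p := by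
  ext <;> simp only [rotateDiff] <;> ring

theorem rotateDiff_mem_shearTorsion {n a w : R} (hw : n ∣ w ^ 2 - w + 1) {p : R × R}
    (hp : p ∈ shearTorsion n a w) : rotateDiff p ∈ shearTorsion n a w := by
  obtain ⟨q, hq⟩ := hw
  obtain ⟨hx, hy⟩ := mem_shearTorsion.1 hp
  refine mem_shearTorsion.2 ⟨?_, ?_⟩
  · calc n * a * (-p.1 - p.2)
        = (w - 1) * (n * a * p.1) - n * (a * (p.2 + w * p.1)) := by ring
      _ = 0 := by rw [hx, hy, mul_zero, mul_zero, sub_zero]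
  · calc a * (p.1 + w * (-p.1 - p.2))
        = a * ((w ^ 2 - w + 1) * p.1) - w * (a * (p.2 + w * p.1)) := by ring
      _ = q * (n * a * p.1) - w * (a * (p.2 + w * p.1)) := by rw [hq]; ring
      _ = 0 := by rw [hx, hy, mul_zero, mul_zero, sub_zero]

theorem rotateDiff_mem_shearTorsion_iff {n a w : R} (hw : n ∣ w ^ 2 - w + 1) {p : R × R} :
    rotateDiff p ∈ shearTorsion n a w ↔ p ∈ shearTorsion n a w := by
  refine ⟨fun hp => ?_, rotateDiff_mem_shearTorsion hw⟩
  rw [← rotateDiff_rotateDiff_rotateDiff p]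
  exact rotateDiff_mem_shearTorsion hw (rotateDiff_mem_shearTorsion hw hp)

end Torsion

section Coordinates

variable {m : ℕ}

/-- The map `v ↦ (v₁ - v₂, v₂ - v₀)` with kernel `Δ`. The first entry is chosen to vanish exactly
on the preimage of `H₀`. -/
def coordHom (m : ℕ) : Vgrp m →* Multiplicative (ZMod m × ZMod m) :=
  MonoidHom.mk' (fun v => .ofAdd ((v 1 / v 2).toAdd, (v 2 / v 0).toAdd)) fun v v' => by
    simp only [Pi.mul_apply, mul_div_mul_comm, toAdd_mul, ← ofAdd_add, Prod.mk_add_mk]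

theorem ker_coordHom (m : ℕ) : (coordHom m).ker = Δgrp m := by
  ext v
  constructor
  · intro hv
    obtain ⟨h12, h20⟩ : v 1 / v 2 = 1 ∧ v 2 / v 0 = 1 := Prod.mk.inj hv
    refine ⟨v 2, funext fun i => ?_⟩
    fin_cases i
    exacts [div_eq_one.1 h20, (div_eq_one.1 h12).symm, rfl]
  · rintro ⟨t, rfl⟩
    exact Prod.ext (div_self' t) (div_self' t)

theorem coordHom_surjective (m : ℕ) : Function.Surjective (coordHom m) := fun p =>
  ⟨![.ofAdd (-p.toAdd.2), .ofAdd p.toAdd.1, 1], by simp [coordHom]⟩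

/-- The coordinates `(v₁ - v₂, v₂ - v₀)` on `W`. -/
noncomputable def coordEquiv (m : ℕ) : Wgrp m ≃* Multiplicative (ZMod m × ZMod m) :=
  (QuotientGroup.quotientMulEquivOfEq (ker_coordHom m).symm).trans
    (QuotientGroup.quotientKerEquivOfSurjective (coordHom m) (coordHom_surjective m))

theorem coordEquiv_permW_finRotate (u : Wgrp m) :
    (coordEquiv m (permW m (finRotate 3) u)).toAdd = rotateDiff (coordEquiv m u).toAdd := by
  induction u using QuotientGroup.induction_on with | H v
  refine Prod.ext ?_ rfl
  change (v 0).toAdd - (v 1).toAdd =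
    -((v 1).toAdd - (v 2).toAdd) - ((v 2).toAdd - (v 0).toAdd)
  ring

/-- The subgroup of `W` whose coordinates lie in a given submodule. -/
noncomputable def ofCoord (L : Submodule (ZMod m) (ZMod m × ZMod m)) : Subgroup (Wgrp m) :=
  (AddSubgroup.toSubgroup L.toAddSubgroup).comap (coordEquiv m : Wgrp m →* _)

theorem card_ofCoord (L : Submodule (ZMod m) (ZMod m × ZMod m)) :
    Nat.card (ofCoord L) = Nat.card L :=
  Nat.card_congr (((coordEquiv m).toEquiv.trans Multiplicative.toAdd).subtypeEquiv
    fun _ => Iff.rfl)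

end Coordinates

section Homologies

variable {m : ℕ}

theorem mk_mem_Hsub {i : Fin 3} {v : Vgrp m} :
    (v : Wgrp m) ∈ Hsub m i ↔ v (i + 1) = v (i + 2) := by
  rw [← div_eq_one]
  constructor
  · rintro ⟨v', hv', hvv'⟩
    obtain ⟨t, ht⟩ := QuotientGroup.eq.1 hvv'
    have hdiff (j : Fin 3) : v j = v' j * t := by
      rw [← inv_mul_eq_iff_eq_mul]
      exact (congrFun ht j).symm
    rw [hdiff, hdiff, mul_div_mul_right_eq_div]
    exact hv'
  · exact fun hv => ⟨v, hv, rfl⟩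

theorem ofCoord_inf_Hsub_zero (L : Submodule (ZMod m) (ZMod m × ZMod m)) :
    ofCoord L ⊓ Hsub m 0 = ofCoord (L ⊓ LinearMap.ker (LinearMap.fst _ _ _)) := by
  ext u
  induction u using QuotientGroup.induction_on with | H v
  exact and_congr_right fun _ => mk_mem_Hsub.trans div_eq_one.symm

theorem permW_finRotate_mem_Hsub {i : Fin 3} {u : Wgrp m} :
    permW m (finRotate 3) u ∈ Hsub m (i + 1) ↔ u ∈ Hsub m i := by
  induction u using QuotientGroup.induction_on with | H v
  have hrot (j : Fin 3) : permV m (finRotate 3) v (j + 1) = v j :=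
    congrArg v (by rw [Equiv.symm_apply_eq, finRotate_apply])
  change ((permV m (finRotate 3) v : Vgrp m) : Wgrp m) ∈ Hsub m (i + 1) ↔ _
  rw [mk_mem_Hsub, mk_mem_Hsub, hrot, add_right_comm i 1 2, hrot]

theorem card_inf_Hsub {N : Subgroup (Wgrp m)}
    (hN : ∀ u, permW m (finRotate 3) u ∈ N ↔ u ∈ N) (i : Fin 3) :
    Nat.card ↥(N ⊓ Hsub m i) = Nat.card ↥(N ⊓ Hsub m 0) := by
  have hstep (i : Fin 3) : Nat.card ↥(N ⊓ Hsub m (i + 1)) = Nat.card ↥(N ⊓ Hsub m i) :=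
    (Nat.card_congr ((permW m (finRotate 3)).toEquiv.subtypeEquiv fun u =>
      (and_congr (hN u) permW_finRotate_mem_Hsub).symm)).symm
  fin_cases i
  exacts [rfl, hstep 0, (hstep 1).trans (hstep 0)]

end Homologies

section InvariantSubgroup

variable {m n a : ℕ}

theorem permW_finRotate_mem_ofCoord_shearTorsion_iff {w : ZMod m}
    (hw : (n : ZMod m) ∣ w ^ 2 - w + 1) (u : Wgrp m) :
    permW m (finRotate 3) u ∈ ofCoord (shearTorsion (n : ZMod m) a w) ↔
      u ∈ ofCoord (shearTorsion (n : ZMod m) a w) := by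
  change (coordEquiv m (permW m (finRotate 3) u)).toAdd ∈ shearTorsion (n : ZMod m) a w ↔ _
  rw [coordEquiv_permW_finRotate]
  exact rotateDiff_mem_shearTorsion_iff hw

variable [NeZero m]

theorem card_ofCoord_shearTorsion (hna : n * a ∣ m) (w : ZMod m) :
    Nat.card (ofCoord (shearTorsion (n : ZMod m) a w)) = n * a * a := by
  rw [card_ofCoord, card_shearTorsion, ← Nat.cast_mul, card_torsionBy_zmod, card_torsionBy_zmod,
    Nat.gcd_eq_right hna, Nat.gcd_eq_right (dvd_of_mul_left_dvd hna)]

theorem card_ofCoord_shearTorsion_inf_Hsub (ha : a ∣ m) {w : ZMod m}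
    (hw : (n : ZMod m) ∣ w ^ 2 - w + 1) (i : Fin 3) :
    Nat.card ↥(ofCoord (shearTorsion (n : ZMod m) a w) ⊓ Hsub m i) = a := by
  rw [card_inf_Hsub (permW_finRotate_mem_ofCoord_shearTorsion_iff hw), ofCoord_inf_Hsub_zero,
    card_ofCoord, card_shearTorsion_inf_ker_fst, card_torsionBy_zmod, Nat.gcd_eq_right ha]

end InvariantSubgroup

section OrderThree

theorem prod_orbit_eq_prod_univ {A : Type*} [CommMonoid A] {τ : Equiv.Perm (Fin 3)}
    (hτ : orderOf τ = 3) (f : Fin 3 → A) (i : Fin 3) :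
    f i * f (τ i) * f (τ (τ i)) = ∏ j, f j := by
  have horbit : ∀ τ : Equiv.Perm (Fin 3), τ ^ 3 = 1 → τ ≠ 1 → ∀ i,
      ({i, τ i, τ (τ i)} : Multiset (Fin 3)) = Finset.univ.val := by
    decide
  have hτ3 : τ ^ 3 = 1 := orderOf_dvd_iff_pow_eq_one.1 hτ.dvd
  have hτ1 : τ ≠ 1 := by
    rintro rfl
    simp at hτ
  simpa [mul_assoc, Fin.prod_univ_three] using
    congrArg (fun s => (s.map f).prod) (horbit τ hτ3 hτ1 i)

theorem mul_permW_mul_permW_sq {m : ℕ} {τ : Equiv.Perm (Fin 3)} (hτ : orderOf τ = 3) (u : Wgrp m) :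
    u * permW m τ u * permW m (τ ^ 2) u = 1 := by
  induction u using QuotientGroup.induction_on with | H v
  refine (QuotientGroup.eq_one_iff (N := Δgrp m) (v * permV m τ v * permV m (τ ^ 2) v)).2
    ⟨∏ j, v j, funext fun i => ?_⟩
  exact (prod_orbit_eq_prod_univ ((orderOf_inv τ).trans hτ) v i).symm

theorem orderOf_eq_three_of_orderOf_right {m : ℕ} {g : Mgrp m} (hg : orderOf g.right = 3) :
    orderOf g = 3 := by
  have hright : g.right ^ 3 = 1 := orderOf_dvd_iff_pow_eq_one.1 hg.dvd
  have hcube : g ^ 3 = 1 := by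
    rw [pow_succ, pow_two]
    refine SemidirectProduct.ext ?_ hright
    have hnorm := mul_permW_mul_permW_sq hg g.left
    rwa [pow_two] at hnorm
  refine Nat.dvd_antisymm (orderOf_dvd_of_pow_eq_one hcube) ?_
  exact hg.symm.dvd.trans (orderOf_map_dvd SemidirectProduct.rightHom g)

end OrderThree

section RotationExtension

variable {m : ℕ}

theorem isThreeCycle_finRotate : (finRotate 3).IsThreeCycle :=
  cycleType_finRotate

/-- The subgroup `N ⋊ ⟨ρ⟩` of `M`, where `ρ` rotates the three coordinates. -/
def rotationExtension (N : Subgroup (Wgrp m)) (hN : ∀ u, permW m (finRotate 3) u ∈ N ↔ u ∈ N) :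
    Subgroup (Mgrp m) :=
  semidirectSubgroup (permW m) N (Subgroup.zpowers (finRotate 3)) <|
    Subgroup.zpowers_le.2 <| mem_stabilizer_mulAut_iff.2 hN

variable {N : Subgroup (Wgrp m)} (hN : ∀ u, permW m (finRotate 3) u ∈ N ↔ u ∈ N)

theorem card_rotationExtension :
    Nat.card (rotationExtension N hN) = Nat.card N * 3 := by
  rw [rotationExtension, card_semidirectSubgroup, Nat.card_zpowers,
    isThreeCycle_finRotate.orderOf]

theorem NG_rotationExtension :
    NG (rotationExtension N hN) = N.map SemidirectProduct.inl :=
  semidirectSubgroup_inf_ker_rightHom _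

theorem card_NG_rotationExtension :
    Nat.card (NG (rotationExtension N hN)) = Nat.card N := by
  rw [NG_rotationExtension, Subgroup.card_map_of_injective SemidirectProduct.inl_injective]

theorem card_NG_rotationExtension_inf_HsubM (i : Fin 3) :
    Nat.card ↥(NG (rotationExtension N hN) ⊓ HsubM m i) = Nat.card ↥(N ⊓ Hsub m i) := by
  rw [NG_rotationExtension, HsubM, ← Subgroup.map_inf _ _ _ SemidirectProduct.inl_injective,
    Subgroup.card_map_of_injective SemidirectProduct.inl_injective]

theorem orderOf_eq_three_of_mem_rotationExtension {g : Mgrp m}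
    (hg : g ∈ rotationExtension N hN) (hgN : g ∉ NG (rotationExtension N hN)) :
    orderOf g = 3 := by
  have hdvd : orderOf g.right ∣ 3 :=
    (orderOf_dvd_of_mem_zpowers hg.2).trans isThreeCycle_finRotate.orderOf.dvd
  have hne : orderOf g.right ≠ 1 := fun h => hgN ⟨hg, orderOf_eq_one_iff.1 h⟩
  exact orderOf_eq_three_of_orderOf_right <|
    ((Nat.dvd_prime Nat.prime_three).1 hdvd).resolve_left hne

end RotationExtension

theorem stmt10_general (m : ℕ) [NeZero m] (a e : ℕ) (hae : a ^ 2 ∣ e) (hdvd : e / a ∣ m)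
    (hw : ∃ w : ℕ, (e / a ^ 2) ∣ (w ^ 2 - w + 1)) :
    ∃ G : Subgroup (Mgrp m), ∃ σ : Equiv.Perm (Fin 3), σ.IsThreeCycle ∧
      Nat.card ↥G = 3 * e ∧
      Nat.card ↥(NG G) = e ∧
      G.map (SemidirectProduct.rightHom : Mgrp m →* Equiv.Perm (Fin 3)) =
        Subgroup.zpowers σ ∧
      (∀ i : Fin 3, Nat.card ↥(NG G ⊓ HsubM m i) = a) ∧
      (∀ x ∈ G, x ∉ NG G → orderOf x = 3) := by
  have ha : 0 < a := Nat.pos_of_ne_zero fun ha => NeZero.ne m (by simpa [ha] using hdvd)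
  obtain ⟨n, rfl⟩ := hae
  obtain ⟨w, hw⟩ := hw
  have hna : n * a ∣ m := by
    rwa [pow_two, mul_assoc, Nat.mul_div_cancel_left _ ha, mul_comm] at hdvd
  have hwm : (n : ZMod m) ∣ (w : ZMod m) ^ 2 - w + 1 := by
    rw [Nat.mul_div_cancel_left _ (pow_pos ha 2)] at hw
    have hcast := Nat.cast_dvd_cast (α := ZMod m) hw
    rwa [Nat.cast_add, Nat.cast_sub (Nat.le_self_pow two_ne_zero w), Nat.cast_pow,
      Nat.cast_one] at hcast
  have hcard : Nat.card (ofCoord (shearTorsion (n : ZMod m) a w)) = a ^ 2 * n := by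
    rw [card_ofCoord_shearTorsion hna]
    ring
  have hrot := permW_finRotate_mem_ofCoord_shearTorsion_iff (a := a) hwm
  refine ⟨rotationExtension _ hrot, finRotate 3, isThreeCycle_finRotate, ?_, ?_,
    map_rightHom_semidirectSubgroup _, fun i => ?_,
    fun _ => orderOf_eq_three_of_mem_rotationExtension hrot⟩
  · rw [card_rotationExtension, hcard, mul_comm]
  · rw [card_NG_rotationExtension, hcard]
  · rw [card_NG_rotationExtension_inf_HsubM,
      card_ofCoord_shearTorsion_inf_Hsub (dvd_of_mul_left_dvd hna) hwm]

/-- Proposition 3.5(i) of Dalla Volta–Montanucci–Zini (case `3 ∤ m`): existence of a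
subgroup `G ≤ M` with `π(G)` cyclic of order 3 generated by a 3-cycle, with given
numerical invariants; every element of `G ∖ N(G)` has order 3. -/
theorem stmt10 (m : ℕ) (hm : 2 ≤ m) (hm3 : ¬ 3 ∣ m) (a e : ℕ)
    (ha0 : 0 < a) (he0 : 0 < e)
    (h1 : e ∣ m ^ 2) (h2 : a ^ 2 ∣ e) (h3 : e / a ∣ m)
    (h4 : Odd (e / a ^ 2)) (h5 : Nat.gcd (e / a ^ 2) a = 1)
    (h6 : ∃ w : ℕ, 0 < w ∧ (e / a ^ 2) ∣ (w ^ 2 - w + 1)) :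
    ∃ G : Subgroup (Mgrp m), ∃ σ : Equiv.Perm (Fin 3), σ.IsThreeCycle ∧
      Nat.card ↥G = 3 * e ∧
      Nat.card ↥(NG G) = e ∧
      G.map (SemidirectProduct.rightHom : Mgrp m →* Equiv.Perm (Fin 3)) =
        Subgroup.zpowers σ ∧
      (∀ i : Fin 3, Nat.card ↥(NG G ⊓ HsubM m i) = a) ∧
      (∀ x ∈ G, x ∉ NG G → orderOf x = 3) := by
  have : NeZero m := ⟨by lia⟩
  exact stmt10_general m a e h2 h3 (h6.imp fun _ => And.right)
end
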